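/- Let I and J be operator ideals with {0} ⊊ I ⊊ J ⊊ B(H), and let C₀ be a Cartan subalgebra of J with U_J(H)-conjugacy class O := {W C₀ W* : W ∈ U_J(H)}. Then there exists an uncountable family (C_i)_{i} of elements of O such that the Cartan subalgebras C_i ∩ I of I are pairwise not U_I(H)-conjugate; consequently the set {C ∩ I : C ∈ O} partitions into uncountably many U_I(H)-conjugacy classes of Cartan subalgebras of I. -/

import Mathlib

/-!
Idea of the proof. Every element of a proper operator ideal is compact (`isCompactOperator_of_mem`),
so the commuting self-adjoint family `C₀` is diagonal with respect to some orthonormal basis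
`(e n)` (`IsCartanSubalgebra.exists_isDiag`). By maximality `C₀` contains all the projections onto
the lines spanned by the `e n`, and these have rank one, so they lie in every nonzero ideal, in
particular in `I`.

Let `S₀`, `S₁` be the isometries onto the closed spans of the even and of the odd basis vectors.
They identify `H` with `H ⊕ H`. Choose a self-adjoint `T ∈ J ∖ I` of norm at most `1/4`, let
`u α = (1 + iαT)(1 - iαT)⁻¹` for `α ∈ (0, 1]` be its Cayley transforms, and let `W α` be the
unitary which on `H ⊕ H` is `1 + ½ (u α - 1) ⊗ [[1, 1], [1, 1]]` (`blockOp`). Then `W α - 1 ∈ J`,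
and the family is `C α = W α C₀ (W α)*`.

Suppose `V ∈ U_I(H)` carries `C α ∩ I` onto `C β ∩ I`, and put `U = (W β)* V (W α)`. Each projection
onto a basis vector is `U Y U*` with `Y` diagonal, hence commutes with `U (S₀ S₀*) U*`, which is
therefore diagonal and commutes with `S₁ S₁*`. It follows that the corner `N = S₁* U S₀` is a
partial isometry (`compression_partialIsometry`). Modulo `I` it equals the corresponding corner
`D = ½ ((u β)* u α - 1)` of `(W β)* W α`, and `‖D‖ < 1`. A partial isometry congruent modulo `I` to
a strict contraction `D` forces `D ∈ I` (`IsOperatorIdeal.mem_of_sub_partialIsometry`). So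
`u α - u β ∈ I`, and for `α ≠ β` the operator `T` is a multiple of this difference
(`exists_cayley`), which contradicts `T ∉ I`.
-/

open Set

/-- A (two-sided) operator ideal of `B(H)`. -/
def IsOperatorIdeal {H : Type*} [NormedAddCommGroup H] [InnerProductSpace ℂ H]
    (I : Set (H →L[ℂ] H)) : Prop :=
  (0 : H →L[ℂ] H) ∈ I ∧
  (∀ A B : H →L[ℂ] H, A ∈ I → B ∈ I → A + B ∈ I) ∧
  (∀ (c : ℂ) (A : H →L[ℂ] H), A ∈ I → c • A ∈ I) ∧
  (∀ (T A : H →L[ℂ] H), A ∈ I → T * A ∈ I ∧ A * T ∈ I)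

/-- `C` is a self-adjoint complex-linear subspace of `I` consisting of mutually
commuting operators. -/
def IsCommSelfAdjointSubspace {H : Type*} [NormedAddCommGroup H] [InnerProductSpace ℂ H]
    [CompleteSpace H] (I C : Set (H →L[ℂ] H)) : Prop :=
  C ⊆ I ∧
  (0 : H →L[ℂ] H) ∈ C ∧
  (∀ S T : H →L[ℂ] H, S ∈ C → T ∈ C → S + T ∈ C) ∧
  (∀ (c : ℂ) (T : H →L[ℂ] H), T ∈ C → c • T ∈ C) ∧
  (∀ T ∈ C, star T ∈ C) ∧
  (∀ S T : H →L[ℂ] H, S ∈ C → T ∈ C → S * T = T * S)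

/-- `C` is a Cartan subalgebra of the operator ideal `I`. -/
def IsCartanSubalgebra {H : Type*} [NormedAddCommGroup H] [InnerProductSpace ℂ H]
    [CompleteSpace H] (I C : Set (H →L[ℂ] H)) : Prop :=
  IsCommSelfAdjointSubspace I C ∧
  ∀ C' : Set (H →L[ℂ] H), IsCommSelfAdjointSubspace I C' → C ⊆ C' → C' = C


open scoped InnerProductSpace
open InnerProductSpace Module

/-! ### Factorization of operators and isometries -/

section Operators

variable {H : Type*} [NormedAddCommGroup H] [InnerProductSpace ℂ H]

theorem hilbertBasis_ext (e : HilbertBasis ℕ ℂ H) {A B : H →L[ℂ] H} (h : ∀ n, A (e n) = B (e n)) :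
    A = B := by
  refine ContinuousLinearMap.ext_on (s := Set.range e) ?_ ?_
  · have := e.dense_span
    rw [Submodule.dense_iff_topologicalClosure_eq_top]; exact this
  · rintro _ ⟨n, rfl⟩; exact h n

theorem hilbertBasis_ext_inner (e : HilbertBasis ℕ ℂ H) {x y : H}
    (h : ∀ n, ⟪e n, x⟫_ℂ = ⟪e n, y⟫_ℂ) : x = y := by
  apply e.repr.injective
  ext n
  simpa [e.repr_apply_apply] using h n

variable [CompleteSpace H]

/-- Douglas factorization: if `B` is dominated by a multiple of `A`, then `A x ↦ B x` is a
well-defined bounded map on the range of `A`; it extends to the closure of that range and then, by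
composing with the orthogonal projection, to all of `H`. -/
theorem exists_factor_of_norm_le (A B : H →L[ℂ] H) (c : ℝ) (h : ∀ x, ‖B x‖ ≤ c * ‖A x‖) :
    ∃ V : H →L[ℂ] H, B = V * A := by
  let K := (LinearMap.range (A : H →ₗ[ℂ] H)).topologicalClosure
  have hK : ∀ x, A x ∈ K := fun x => Submodule.le_topologicalClosure _ ⟨x, rfl⟩
  have : CompleteSpace K := (Submodule.isClosed_topologicalClosure _).completeSpace_coe
  let e : H →ₗ[ℂ] K := (A : H →ₗ[ℂ] H).codRestrict K hK
  have hd : DenseRange e := by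
    intro y
    rw [Metric.mem_closure_iff]
    intro ε hε
    obtain ⟨z, ⟨x, hx⟩, hz⟩ := Metric.mem_closure_iff.1 y.2 ε hε
    refine ⟨e x, ⟨x, rfl⟩, ?_⟩
    rw [Subtype.dist_eq]
    have : ((e x : K) : H) = z := hx
    rwa [this]
  refine ⟨((B : H →ₗ[ℂ] H).extendOfNorm e) ∘L K.orthogonalProjectionOnto, ?_⟩
  ext x
  have h1 : K.orthogonalProjectionOnto (A x) = e x :=
    Submodule.orthogonalProjectionOnto_mem_subspace_eq_self (e x)
  change B x = (B : H →ₗ[ℂ] H).extendOfNorm e (K.orthogonalProjectionOnto (A x))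
  rw [h1, LinearMap.extendOfNorm_eq hd ⟨c, h⟩]
  rfl

/-- The isometry which sends a Hilbert basis to a given orthonormal sequence. -/
theorem exists_isometry (e : HilbertBasis ℕ ℂ H) {x : ℕ → H} (hx : Orthonormal ℂ x) :
    ∃ S : H →L[ℂ] H, star S * S = 1 ∧ ∀ n, S (e n) = x n := by
  classical
  let L : H →ₗᵢ[ℂ] H := hx.orthogonalFamily.linearIsometry.comp e.repr.toLinearIsometry
  refine ⟨L.toContinuousLinearMap, ?_, ?_⟩
  · ext y
    refine ext_inner_left ℂ fun z => ?_
    rw [mul_apply_eq_comp, ContinuousLinearMap.star_eq_adjoint,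
      ContinuousLinearMap.adjoint_inner_right]
    exact L.inner_map_map z y
  · intro n
    change hx.orthogonalFamily.linearIsometry (e.repr (e n)) = x n
    rw [e.repr_self, OrthogonalFamily.linearIsometry_apply_single]
    simp

theorem norm_cfcAbs_apply (T : H →L[ℂ] H) (x : H) : ‖CFC.abs T x‖ = ‖T x‖ := by
  have h1 : star (CFC.abs T) = CFC.abs T := (CFC.abs_nonneg T).isSelfAdjoint
  have h2 : star (CFC.abs T) * CFC.abs T = star T * T := by rw [h1, CFC.abs_mul_abs]
  have h3 : ∀ S : H →L[ℂ] H, ((‖S x‖ : ℂ)) ^ 2 = ⟪x, (star S * S) x⟫_ℂ := by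
    intro S
    rw [mul_apply_eq_comp, ContinuousLinearMap.star_eq_adjoint,
      ContinuousLinearMap.adjoint_inner_right, inner_self_eq_norm_sq_to_K]
    rfl
  have h4 := (h3 (CFC.abs T)).trans ((congrArg (fun S : H →L[ℂ] H => ⟪x, S x⟫_ℂ) h2).trans (h3 T).symm)
  have h5 : ‖CFC.abs T x‖ ^ 2 = ‖T x‖ ^ 2 := by exact_mod_cast h4
  exact (sq_eq_sq₀ (norm_nonneg _) (norm_nonneg _)).1 h5

end Operators

/-! ### Proper operator ideals consist of compact operators -/

section Compactness

variable {H : Type*} [NormedAddCommGroup H] [InnerProductSpace ℂ H] [CompleteSpace H]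

/-- An operator that is arbitrarily small on orthogonal complements of finite-dimensional spaces is
a norm limit of finite-rank operators, hence compact; this is the contrapositive. -/
theorem exists_norm_lower_bound_of_not_compact (T : H →L[ℂ] H) (hT : ¬ IsCompactOperator T) :
    ∃ ε > 0, ∀ F : Submodule ℂ H, FiniteDimensional ℂ F → ∃ x ∈ Fᗮ, ‖x‖ = 1 ∧ ε ≤ ‖T x‖ := by
  by_contra! hcon
  apply hT
  have hmem : T ∈ closure {G : H →L[ℂ] H | IsCompactOperator G} := by
    rw [Metric.mem_closure_iff]
    intro ε hε
    obtain ⟨F, hF, hlt⟩ := hcon (ε / 2) (by positivity)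
    refine ⟨T ∘L F.starProjection, ?_, ?_⟩
    · have hP : IsCompactOperator (F.orthogonalProjectionOnto) :=
        have : ProperSpace F := FiniteDimensional.proper ℂ F
        isCompactOperator_of_locallyCompactSpace_dom F.orthogonalProjectionOnto
      exact hP.clm_comp (T ∘L F.subtypeL)
    · rw [dist_eq_norm]
      refine lt_of_le_of_lt (ContinuousLinearMap.opNorm_le_bound _ (M := ε / 2) (by positivity) ?_)
        (by linarith)
      intro x
      have hy : x - F.starProjection x ∈ Fᗮ := F.sub_starProjection_mem_orthogonal x
      have hTy : ∀ y ∈ Fᗮ, ‖T y‖ ≤ ε / 2 * ‖y‖ := by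
        intro y hy
        rcases eq_or_ne y 0 with rfl | hy0
        · simp
        have hn : ‖y‖ ≠ 0 := norm_ne_zero_iff.2 hy0
        have := hlt ((‖y‖⁻¹ : ℂ) • y) (Fᗮ.smul_mem _ hy) (by simp [norm_smul, hn])
        rw [map_smul, norm_smul] at this
        simp only [norm_inv, Complex.norm_real, norm_norm] at this
        rw [inv_mul_lt_iff₀ (by positivity)] at this
        linarith
      have hnorm : ‖x - F.starProjection x‖ ≤ ‖x‖ := by
        have h1 := F.norm_sq_eq_add_norm_sq_starProjection x
        rw [F.starProjection_orthogonal_val x] at h1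
        exact abs_le_of_sq_le_sq' (by nlinarith [sq_nonneg ‖F.starProjection x‖]) (norm_nonneg _) |>.2
      calc ‖(T - T ∘L F.starProjection) x‖ = ‖T (x - F.starProjection x)‖ := by simp
        _ ≤ ε / 2 * ‖x - F.starProjection x‖ := hTy _ hy
        _ ≤ ε / 2 * ‖x‖ := by gcongr
  rwa [isClosed_setOfPred_isCompactOperator.closure_eq] at hmem

/-- A proper operator ideal contains only compact operators (Calkin). If `T ∈ J` were not compact,
there would be an orthonormal sequence `x n` with orthogonal images `T (x n)` of norm at least
`ε > 0`. Compressing `T` to these sequences gives an element of `J` that is diagonal with entries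
`‖T (x n)‖ ≥ ε`; it is bounded below, so `1 ∈ J` by Douglas factorization. -/
theorem isCompactOperator_of_mem (b : HilbertBasis ℕ ℂ H) {J : Set (H →L[ℂ] H)}
    (hJ : IsOperatorIdeal J) (hJproper : ∃ T : H →L[ℂ] H, T ∉ J) {T : H →L[ℂ] H} (hT : T ∈ J) :
    IsCompactOperator T := by
  classical
  by_contra hnc
  obtain ⟨ε, hε, hF⟩ := exists_norm_lower_bound_of_not_compact T hnc
  -- `x n` is chosen inductively, orthogonal to all earlier `x m` and `T* T (x m)`
  obtain ⟨x, hx, hxx⟩ := exists_seq_of_forall_finset_exists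
    (fun x : H => ‖x‖ = 1 ∧ ε ≤ ‖T x‖) (fun x y => ⟪x, y⟫_ℂ = 0 ∧ ⟪T x, T y⟫_ℂ = 0) (by
      intro s _
      let F := Submodule.span ℂ ((s ∪ s.image (fun x => (star T * T) x) : Finset H) : Set H)
      obtain ⟨y, hy, hy1, hy2⟩ := hF F (FiniteDimensional.span_finset ℂ _)
      refine ⟨y, ⟨hy1, hy2⟩, fun x hxs => ⟨?_, ?_⟩⟩
      · exact (Submodule.mem_orthogonal _ _).1 hy x (Submodule.subset_span (by simp [hxs]))
      · have := (Submodule.mem_orthogonal _ _).1 hy ((star T * T) x)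
          (Submodule.subset_span (by
            simp only [Finset.coe_union, Finset.coe_image]
            exact Or.inr ⟨x, hxs, rfl⟩))
        rwa [mul_apply_eq_comp, ContinuousLinearMap.star_eq_adjoint,
          ContinuousLinearMap.adjoint_inner_left] at this)
  have hpos : ∀ n, 0 < ‖T (x n)‖ := fun n => hε.trans_le (hx n).2
  have horth : ∀ m n, m ≠ n → ⟪x m, x n⟫_ℂ = 0 ∧ ⟪T (x m), T (x n)⟫_ℂ = 0 := by
    intro m n hmn
    rcases lt_or_gt_of_ne hmn with h | h
    · exact hxx m n h
    · exact ⟨inner_eq_zero_symm.1 (hxx n m h).1, inner_eq_zero_symm.1 (hxx n m h).2⟩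
  obtain ⟨S, -, hS⟩ := exists_isometry b (x := x) ⟨fun n => (hx n).1, fun m n h => (horth m n h).1⟩
  obtain ⟨S', -, hS'⟩ := exists_isometry b (x := fun n => ((‖T (x n)‖⁻¹ : ℝ) : ℂ) • T (x n))
    ⟨fun n => by
      rw [norm_smul, Complex.norm_real, norm_inv, norm_norm, inv_mul_cancel₀ (hpos n).ne'],
     fun m n h => by simp only [inner_smul_left, inner_smul_right, (horth m n h).2, mul_zero]⟩
  set D : H →L[ℂ] H := star S' * T * S with hD
  have hDJ : D ∈ J := (hJ.2.2.2 S _ (hJ.2.2.2 (star S') T hT).1).2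
  -- `D` turns out to be diagonal in the basis `b`, with entries `‖T (x n)‖`
  have hDe : ∀ m n, ⟪b m, D (b n)⟫_ℂ = if m = n then (‖T (x n)‖ : ℂ) else 0 := by
    intro m n
    rw [hD, mul_apply_eq_comp, mul_apply_eq_comp, hS, ContinuousLinearMap.star_eq_adjoint,
      ContinuousLinearMap.adjoint_inner_right, hS', inner_smul_left]
    split_ifs with h
    · subst h
      rw [inner_self_eq_norm_sq_to_K]
      simp only [Complex.conj_ofReal]
      have := (hpos m).ne'
      simp only [Complex.coe_algebraMap]
      norm_cast
      field_simp
    · rw [(horth m n h).2, mul_zero]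
  have hstar : ∀ m, (star D) (b m) = (‖T (x m)‖ : ℂ) • b m := by
    intro m
    refine hilbertBasis_ext_inner b fun n => ?_
    rw [ContinuousLinearMap.star_eq_adjoint, ContinuousLinearMap.adjoint_inner_right,
      ← inner_conj_symm, hDe, inner_smul_right, orthonormal_iff_ite.1 b.orthonormal]
    by_cases h : m = n
    · subst h; simp
    · simp [h, Ne.symm h]
  have hcoord : ∀ m y, ⟪b m, D y⟫_ℂ = (‖T (x m)‖ : ℂ) * ⟪b m, y⟫_ℂ := by
    intro m y
    rw [← ContinuousLinearMap.adjoint_inner_left, ← ContinuousLinearMap.star_eq_adjoint, hstar,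
      inner_smul_left, Complex.conj_ofReal]
  have hlow : ∀ y, ‖y‖ ≤ ε⁻¹ * ‖D y‖ := by
    intro y
    have hs : ∀ z : H, HasSum (fun n => ‖⟪b n, z⟫_ℂ‖ ^ 2) (‖z‖ ^ 2) := by
      intro z
      have h1 := b.hasSum_inner_mul_inner z z
      rw [inner_self_eq_norm_sq_to_K] at h1
      have h2 := Complex.hasSum_re h1
      convert h2 using 1
      · funext n
        rw [← inner_conj_symm z (b n), ← Complex.normSq_eq_conj_mul_self, Complex.normSq_eq_norm_sq]
        norm_cast
      · simp only [Complex.coe_algebraMap]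
        norm_cast
    have h3 : ε ^ 2 * ‖y‖ ^ 2 ≤ ‖D y‖ ^ 2 := by
      refine hasSum_le (fun n => ?_) ((hs y).mul_left (ε ^ 2)) (hs (D y))
      rw [hcoord, norm_mul, mul_pow, Complex.norm_real, norm_norm]
      have := (hx n).2
      gcongr
    have h4 : ε * ‖y‖ ≤ ‖D y‖ := by
      refine abs_le_of_sq_le_sq' (by nlinarith) (norm_nonneg _) |>.2
    rw [inv_mul_eq_div, le_div_iff₀ hε]; linarith
  obtain ⟨V, hV⟩ := exists_factor_of_norm_le D 1 ε⁻¹ (by simpa using hlow)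
  obtain ⟨R, hR⟩ := hJproper
  apply hR
  have := (hJ.2.2.2 R _ (hJ.2.2.2 V D hDJ).1).1
  rwa [← hV, mul_one] at this

end Compactness

/-! ### Joint diagonalization of commuting compact self-adjoint operators -/

section Diagonalization

variable {H : Type*} [NormedAddCommGroup H] [InnerProductSpace ℂ H] [CompleteSpace H]

theorem exists_joint_eigenvector_of_finiteDimensional {C : Set (H →L[ℂ] H)}
    (hsa : ∀ A ∈ C, IsSelfAdjoint A) (hcomm : ∀ A ∈ C, ∀ B ∈ C, A * B = B * A)
    (V : Submodule ℂ H) [FiniteDimensional ℂ V] (hV : V ≠ ⊥)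
    (hinv : ∀ A ∈ C, ∀ x ∈ V, A x ∈ V) :
    ∃ v ∈ V, v ≠ 0 ∧ ∀ A ∈ C, ∃ μ : ℂ, A v = μ • v := by
  let T : C → V →ₗ[ℂ] V := fun A => (A.1 : H →ₗ[ℂ] H).restrict (hinv A.1 A.2)
  have hT : ∀ A, (T A).IsSymmetric := fun A x y =>
    (hsa A.1 A.2).isSymmetric x y
  have hC : Pairwise (Function.onFun Commute T) := by
    intro A B _
    refine LinearMap.ext fun x => Subtype.ext ?_
    exact congrArg (fun S : H →L[ℂ] H => S x) (hcomm A.1 A.2 B.1 B.2)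
  have htop := LinearMap.IsSymmetric.iSup_iInf_eq_top_of_commute hT hC
  have : ∃ χ : C → ℂ, (⨅ A, End.eigenspace (T A) (χ A)) ≠ ⊥ := by
    by_contra! hbot
    simp only [hbot, iSup_bot] at htop
    apply hV
    rw [Submodule.eq_bot_iff]
    intro x hx
    have : (⟨x, hx⟩ : V) ∈ (⊥ : Submodule ℂ V) := htop ▸ Submodule.mem_top
    simpa using this
  obtain ⟨χ, hχ⟩ := this
  obtain ⟨v, hv, hv0⟩ := Submodule.exists_mem_ne_zero_of_ne_bot hχ
  refine ⟨v, v.2, by simpa using hv0, fun A hA => ⟨χ ⟨A, hA⟩, ?_⟩⟩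
  have := End.mem_eigenspace_iff.1 ((Submodule.mem_iInf _).1 hv ⟨A, hA⟩)
  exact congrArg Subtype.val this

/-- A commuting family of compact self-adjoint operators has a joint eigenvector in every nonzero
closed invariant subspace `M`. Unless the family vanishes on `M`, some `B` in it restricts to a
nonzero compact self-adjoint operator on `M`, and an eigenspace of this restriction for a nonzero
eigenvalue is finite-dimensional and invariant under the family. The restriction is realized as
`B * P` on all of `H`, where `P` is the orthogonal projection onto `M`. -/
theorem exists_joint_eigenvector {C : Set (H →L[ℂ] H)}
    (hsa : ∀ A ∈ C, IsSelfAdjoint A) (hcpt : ∀ A ∈ C, IsCompactOperator A)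
    (hcomm : ∀ A ∈ C, ∀ B ∈ C, A * B = B * A)
    (M : Submodule ℂ H) (hMc : IsClosed (M : Set H)) (hM : M ≠ ⊥)
    (hinv : ∀ A ∈ C, ∀ x ∈ M, A x ∈ M) :
    ∃ v ∈ M, v ≠ 0 ∧ ∀ A ∈ C, ∃ μ : ℂ, A v = μ • v := by
  have : CompleteSpace M := hMc.completeSpace_coe
  by_cases hzero : ∀ A ∈ C, ∀ x ∈ M, A x = 0
  · obtain ⟨v, hv, hv0⟩ := Submodule.exists_mem_ne_zero_of_ne_bot hM
    exact ⟨v, hv, hv0, fun A hA => ⟨0, by rw [hzero A hA v hv, zero_smul]⟩⟩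
  push Not at hzero
  obtain ⟨B, hB, x, hx, hBx⟩ := hzero
  let P := M.starProjection
  have hPM : ∀ y, P y ∈ M := fun y => M.starProjection_apply_mem y
  have hPid : ∀ y ∈ M, P y = y := fun y hy => Submodule.starProjection_eq_self_iff.2 hy
  have hPsa : IsSelfAdjoint P := isSelfAdjoint_starProjection M
  have hPcomm : ∀ A ∈ C, A * P = P * A := by
    intro A hA
    have h1 : P * (A * P) = A * P := by
      ext y; exact hPid _ (hinv A hA _ (hPM y))
    have h2 := congrArg star h1
    simp only [star_mul, hPsa.star_eq, (hsa A hA).star_eq] at h2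
    rw [← h1, ← mul_assoc, h2]
  let B' : H →L[ℂ] H := B * P
  have hB'sa : IsSelfAdjoint B' := by
    rw [IsSelfAdjoint, star_mul, hPsa.star_eq, (hsa B hB).star_eq, ← hPcomm B hB]
  have hB'c : IsCompactOperator B' := (hcpt B hB).comp_clm P
  have hB'0 : B' ≠ 0 := by
    intro h
    apply hBx
    have := congrArg (fun S : H →L[ℂ] H => S x) h
    simpa [B', hPid x hx] using this
  obtain ⟨μ, hμ, hμ0⟩ : ∃ μ, End.HasEigenvalue (B' : H →ₗ[ℂ] H) μ ∧ μ ≠ 0 := by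
    by_contra! hcon
    exact hB'0 ((ContinuousLinearMap.eq_zero_of_forall_hasEigenvalue_eq_zero hB'c
      hB'sa.isSymmetric).1 hcon)
  let V := End.eigenspace (B' : H →ₗ[ℂ] H) μ
  have hVmem : ∀ y, y ∈ V ↔ B' y = μ • y := fun y => End.mem_eigenspace_iff
  have : FiniteDimensional ℂ V :=
    ContinuousLinearMap.finite_dimensional_eigenspace hB'c μ hμ0
  have hVM : ∀ y ∈ V, y ∈ M := by
    intro y hy
    have h1 : B' y ∈ M := hinv B hB _ (hPM y)
    rw [(hVmem y).1 hy] at h1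
    simpa [smul_smul, hμ0] using M.smul_mem μ⁻¹ h1
  obtain ⟨v, hv, h⟩ := exists_joint_eigenvector_of_finiteDimensional hsa hcomm V hμ (by
    intro A hA y hy
    have h1 : B' * A = A * B' := by
      change B * P * A = A * (B * P)
      rw [mul_assoc, ← hPcomm A hA, ← mul_assoc, ← mul_assoc, hcomm A hA B hB]
    rw [hVmem]
    have h2 := congrArg (fun S : H →L[ℂ] H => S y) h1
    simp only [mul_apply_eq_comp] at h2
    rw [h2, (hVmem y).1 hy, map_smul])
  exact ⟨v, hVM v hv, h⟩

/-- A complete orthonormal set in a space with a countably infinite Hilbert basis is itself countably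
infinite, so it can be enumerated by `ℕ`. -/
theorem exists_hilbertBasis_nat (b : HilbertBasis ℕ ℂ H) {s : Set H}
    (hs : Orthonormal ℂ (Subtype.val : s → H)) (hbot : (Submodule.span ℂ s)ᗮ = ⊥) :
    ∃ e : HilbertBasis ℕ ℂ H, ∀ n, e n ∈ s := by
  have hcount : s.Countable := by
    have h1 : s ⊆ ⋃ n, Subtype.val '' (Function.support fun v : s => ‖⟪(v : H), b n⟫_ℂ‖ ^ 2) := by
      intro v hv
      by_contra hcon
      simp only [mem_iUnion, not_exists] at hcon
      refine hs.ne_zero ⟨v, hv⟩ (hilbertBasis_ext_inner b fun n => ?_)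
      by_contra hn
      refine hcon n ⟨⟨v, hv⟩, ?_, rfl⟩
      rw [Function.mem_support]
      rw [inner_zero_right] at hn
      have : ⟪v, b n⟫_ℂ ≠ 0 := fun h => hn (inner_eq_zero_symm.1 h)
      positivity
    refine Set.Countable.mono h1 (Set.countable_iUnion fun n => Set.Countable.image ?_ _)
    exact (hs.inner_products_summable (b n)).countable_support
  have hinf : s.Infinite := by
    intro hfin
    have : FiniteDimensional ℂ (Submodule.span ℂ s) := FiniteDimensional.span_of_finite ℂ hfin
    have htop : Submodule.span ℂ s = ⊤ := Submodule.orthogonal_eq_bot_iff.1 hbot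
    rw [htop] at this
    have : FiniteDimensional ℂ H := Module.finite_def.2 (Module.Finite.iff_fg.1 this)
    have := b.orthonormal.linearIndependent.finite
    exact not_finite ℕ
  have := hcount.to_subtype
  have := hinf.to_subtype
  obtain ⟨f⟩ := nonempty_equiv_of_countable (α := ℕ) (β := s)
  have hv : Orthonormal ℂ (fun n => (f n : H)) := hs.comp f f.injective
  have hr : Set.range (fun n => (f n : H)) = s := by
    ext v
    exact ⟨fun ⟨n, hn⟩ => hn ▸ (f n).2, fun h => ⟨f.symm ⟨v, h⟩, by simp⟩⟩
  refine ⟨HilbertBasis.mkOfOrthogonalEqBot hv (by rw [hr, hbot]), fun n => ?_⟩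
  rw [HilbertBasis.coe_mkOfOrthogonalEqBot]
  exact (f n).2

/-- Spectral theorem for commuting compact self-adjoint operators: a maximal orthonormal set of joint
eigenvectors is complete, because its orthogonal complement is invariant and would otherwise
contain a further joint eigenvector. -/
theorem exists_joint_eigenbasis (b : HilbertBasis ℕ ℂ H) {C : Set (H →L[ℂ] H)}
    (hsa : ∀ A ∈ C, IsSelfAdjoint A) (hcpt : ∀ A ∈ C, IsCompactOperator A)
    (hcomm : ∀ A ∈ C, ∀ B ∈ C, A * B = B * A) :
    ∃ e : HilbertBasis ℕ ℂ H, ∀ A ∈ C, ∀ n, ∃ μ : ℂ, A (e n) = μ • e n := by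
  let F : Set (Set H) := {s | Orthonormal ℂ (Subtype.val : s → H) ∧
    ∀ v ∈ s, ∀ A ∈ C, ∃ μ : ℂ, A v = μ • v}
  obtain ⟨s, hs⟩ : ∃ s, Maximal (· ∈ F) s := by
    refine zorn_subset F fun c hc cc => ⟨⋃₀ c, ⟨?_, ?_⟩, fun _ => Set.subset_sUnion_of_mem⟩
    · exact orthonormal_sUnion_of_directed cc.directedOn fun x xc => (hc xc).1
    · rintro v ⟨t, ht, hv⟩
      exact (hc ht).2 v hv
  obtain ⟨hso, hse⟩ := hs.1
  have hbot : (Submodule.span ℂ s)ᗮ = ⊥ := by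
    by_contra hM
    obtain ⟨v, hv, hv0, hvC⟩ := exists_joint_eigenvector hsa hcpt hcomm (Submodule.span ℂ s)ᗮ
      (Submodule.isClosed_orthogonal _) hM (by
        intro A hA x hx
        rw [Submodule.mem_orthogonal] at hx ⊢
        intro u hu
        have h1 : A u ∈ Submodule.span ℂ s := by
          induction hu using Submodule.span_induction with
          | mem w hw =>
            obtain ⟨μ, hμ⟩ := hse w hw A hA
            rw [hμ]
            exact Submodule.smul_mem _ _ (Submodule.subset_span hw)
          | zero => simp
          | add p q _ _ hp hq => rw [map_add]; exact Submodule.add_mem _ hp hq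
          | smul c p _ hp => rw [map_smul]; exact Submodule.smul_mem _ _ hp
        have h2 := hx _ h1
        rwa [show ⟪A u, x⟫_ℂ = ⟪u, A x⟫_ℂ from (hsa A hA).isSymmetric u x] at h2)
    let w : H := (‖v‖⁻¹ : ℂ) • v
    have hn : ‖v‖ ≠ 0 := norm_ne_zero_iff.2 hv0
    have hw1 : ‖w‖ = 1 := by simp [w, norm_smul, hn]
    have hwM : w ∈ (Submodule.span ℂ s)ᗮ := Submodule.smul_mem _ _ hv
    have hworth : ∀ u ∈ s, ⟪u, w⟫_ℂ = 0 := fun u hu =>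
      (Submodule.mem_orthogonal _ _).1 hwM u (Submodule.subset_span hu)
    have hins : insert w s ∈ F := by
      classical
      refine ⟨?_, ?_⟩
      · rw [orthonormal_subtype_iff_ite] at hso ⊢
        have hws : w ∉ s := fun h => by
          have := hworth w h
          rw [inner_self_eq_zero] at this
          simp [this] at hw1
        rintro p (rfl | hp) q (rfl | hq)
        · simp [inner_self_eq_norm_sq_to_K, hw1]
        · rw [if_neg (fun h : w = q => hws (h ▸ hq)), inner_eq_zero_symm.1 (hworth q hq)]
        · rw [if_neg (fun h : p = w => hws (h ▸ hp)), hworth p hp]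
        · exact hso p hp q hq
      · rintro p (rfl | hp) A hA
        · obtain ⟨μ, hμ⟩ := hvC A hA
          exact ⟨μ, by rw [map_smul, hμ, smul_comm]⟩
        · exact hse p hp A hA
    have hwin : w ∈ s := hs.2 hins (Set.subset_insert _ _) (Set.mem_insert _ _)
    have := hworth w hwin
    rw [inner_self_eq_zero] at this
    simp [this] at hw1
  obtain ⟨e, he⟩ := exists_hilbertBasis_nat b hso hbot
  exact ⟨e, fun A hA n => hse _ (he n) A hA⟩

end Diagonalization

/-! ### Cartan subalgebras are diagonal -/

section Diagonal

variable {H : Type*} [NormedAddCommGroup H] [InnerProductSpace ℂ H]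

/-- `A` is diagonal with respect to the Hilbert basis `e`: every basis vector is an eigenvector,
possibly with eigenvalue zero. -/
def IsDiag (e : HilbertBasis ℕ ℂ H) (A : H →L[ℂ] H) : Prop :=
  ∀ n, ∃ μ : ℂ, A (e n) = μ • e n

theorem IsDiag.mul_comm {e : HilbertBasis ℕ ℂ H} {A B : H →L[ℂ] H} (hA : IsDiag e A)
    (hB : IsDiag e B) : A * B = B * A := by
  refine hilbertBasis_ext e fun n => ?_
  obtain ⟨a, ha⟩ := hA n
  obtain ⟨c, hc⟩ := hB n
  simp only [mul_apply_eq_comp, ha, hc, map_smul]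
  rw [smul_comm]

theorem isDiag_rankOne (e : HilbertBasis ℕ ℂ H) (n : ℕ) : IsDiag e (rankOne ℂ (e n) (e n)) := by
  intro m
  by_cases h : n = m
  · subst h
    exact ⟨_, rankOne_apply _ _ _⟩
  · exact ⟨0, by rw [rankOne_apply, e.orthonormal.2 h, zero_smul, zero_smul]⟩

theorem isDiag_of_commute_rankOne {e : HilbertBasis ℕ ℂ H} {Z : H →L[ℂ] H}
    (h : ∀ n, Z * rankOne ℂ (e n) (e n) = rankOne ℂ (e n) (e n) * Z) : IsDiag e Z := by
  intro n
  have h1 := congrArg (fun S : H →L[ℂ] H => S (e n)) (h n)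
  simp only [mul_apply_eq_comp, rankOne_apply, map_smul] at h1
  rw [inner_self_eq_norm_sq_to_K, e.orthonormal.1 n] at h1
  exact ⟨_, by simpa using h1⟩

/-- A nonzero operator ideal contains every operator of rank one. -/
theorem rankOne_mem {I : Set (H →L[ℂ] H)} (hI : IsOperatorIdeal I)
    (hInz : ∃ T ∈ I, T ≠ (0 : H →L[ℂ] H)) (v w : H) : rankOne ℂ v w ∈ I := by
  obtain ⟨T, hT, hT0⟩ := hInz
  obtain ⟨x, hx⟩ : ∃ x, T x ≠ 0 := by
    by_contra! h
    exact hT0 (ContinuousLinearMap.ext h)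
  have h1 : rankOne ℂ v w = (⟪T x, T x⟫_ℂ)⁻¹ • (rankOne ℂ v (T x) * (T * rankOne ℂ x w)) := by
    ext y
    have : ⟪T x, T x⟫_ℂ ≠ 0 := inner_self_ne_zero.2 hx
    simp only [_root_.smul_apply, mul_apply_eq_comp, rankOne_apply, map_smul,
      smul_smul]
    congr 1
    field_simp
  rw [h1]
  exact hI.2.2.1 _ _ (hI.2.2.2 _ _ (hI.2.2.2 _ _ hT).2).1

variable [CompleteSpace H]

/-- The joint eigenbasis theorem is applied to the self-adjoint elements of `C`, which contain the
real and imaginary parts of every element of `C`. -/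
theorem IsCartanSubalgebra.exists_isDiag (b : HilbertBasis ℕ ℂ H) {J C : Set (H →L[ℂ] H)}
    (hJ : IsOperatorIdeal J) (hJproper : ∃ T : H →L[ℂ] H, T ∉ J) (hC : IsCartanSubalgebra J C) :
    ∃ e : HilbertBasis ℕ ℂ H, ∀ A ∈ C, IsDiag e A := by
  obtain ⟨⟨hCJ, -, hadd, hsmul, hstar, hcomm⟩, -⟩ := hC
  obtain ⟨e, he⟩ := exists_joint_eigenbasis b (C := {A ∈ C | IsSelfAdjoint A})
    (fun A hA => hA.2) (fun A hA => isCompactOperator_of_mem b hJ hJproper (hCJ hA.1))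
    (fun A hA B hB => hcomm A B hA.1 hB.1)
  refine ⟨e, fun A hA n => ?_⟩
  have h1 : A + star A ∈ {A ∈ C | IsSelfAdjoint A} :=
    ⟨hadd _ _ hA (hstar A hA), IsSelfAdjoint.add_star_self A⟩
  have h2 : Complex.I • (A + (-1 : ℂ) • star A) ∈ {A ∈ C | IsSelfAdjoint A} := by
    refine ⟨hsmul _ _ (hadd _ _ hA (hsmul _ _ (hstar A hA))), ?_⟩
    rw [IsSelfAdjoint, star_smul, star_add, star_smul, star_star]
    simp only [Complex.star_def, Complex.conj_I, map_neg, map_one, smul_add, smul_smul]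
    rw [add_comm]
    simp
  obtain ⟨μ, hμ⟩ := he _ h1 n
  obtain ⟨ν, hν⟩ := he _ h2 n
  have h3 : A = (1 / 2 : ℂ) • (A + star A) +
      (-Complex.I / 2) • (Complex.I • (A + (-1 : ℂ) • star A)) := by
    have hII : -Complex.I / 2 * Complex.I = 1 / 2 := by
      rw [div_mul_eq_mul_div, neg_mul, Complex.I_mul_I, neg_neg]
    rw [smul_smul, hII]
    module
  refine ⟨1 / 2 * μ + -Complex.I / 2 * ν, ?_⟩
  conv_lhs => rw [h3]
  rw [_root_.add_apply, _root_.smul_apply, hμ,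
    _root_.smul_apply, hν]
  module

/-- Maximality of a Cartan subalgebra: adjoining to `C` the multiples of a self-adjoint element `P` of
`J` that commutes with `C` gives no larger commutative self-adjoint subspace. -/
theorem IsCartanSubalgebra.mem_of_commute {J C : Set (H →L[ℂ] H)}
    (hJ : IsOperatorIdeal J) (hC : IsCartanSubalgebra J C) {P : H →L[ℂ] H} (hP : P ∈ J)
    (hPsa : star P = P) (hPC : ∀ A ∈ C, A * P = P * A) : P ∈ C := by
  obtain ⟨⟨hCJ, hzero, hadd, hsmul, hstar, hcomm⟩, hmax⟩ := hC
  have hC' : IsCommSelfAdjointSubspace J {X | ∃ A ∈ C, ∃ c : ℂ, X = A + c • P} := by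
    refine ⟨?_, ⟨0, hzero, 0, by simp⟩, ?_, ?_, ?_, ?_⟩
    · rintro X ⟨A, hA, c, rfl⟩
      exact hJ.2.1 _ _ (hCJ hA) (hJ.2.2.1 _ _ hP)
    · rintro _ _ ⟨A, hA, c, rfl⟩ ⟨B, hB, d, rfl⟩
      exact ⟨A + B, hadd _ _ hA hB, c + d, by module⟩
    · rintro k _ ⟨A, hA, c, rfl⟩
      exact ⟨k • A, hsmul _ _ hA, k * c, by module⟩
    · rintro _ ⟨A, hA, c, rfl⟩
      exact ⟨star A, hstar A hA, star c, by rw [star_add, star_smul, hPsa]⟩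
    · rintro _ _ ⟨A, hA, c, rfl⟩ ⟨B, hB, d, rfl⟩
      simp only [add_mul, mul_add, smul_mul_assoc, mul_smul_comm, hcomm A B hA hB, hPC A hA,
        hPC B hB, smul_add, smul_comm c d]
      abel
  have heq := hmax _ hC' fun A hA => ⟨A, hA, 0, by simp⟩
  rw [← heq]
  exact ⟨0, hzero, 1, by simp⟩

end Diagonal

/-! ### Partial isometries, Cayley transforms and block unitaries -/

section Unitaries

variable {H : Type*} [NormedAddCommGroup H] [InnerProductSpace ℂ H]

theorem norm_one_operator_le : ‖(1 : H →L[ℂ] H)‖ ≤ 1 := ContinuousLinearMap.norm_id_le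

variable [CompleteSpace H]

theorem norm_le_one_of_star_mul_self {S : H →L[ℂ] H} (hS : star S * S = 1) : ‖S‖ ≤ 1 := by
  have h := CStarRing.norm_star_mul_self (x := S)
  rw [hS] at h
  nlinarith [norm_nonneg S, norm_one_operator_le (H := H)]

/-- A strict contraction `D` that is congruent modulo `I` to a partial isometry `N` belongs to `I`.
Indeed `(1 - N* D) N* N = N* (N - D) N* N ∈ I` with `1 - N* D` invertible, so `N* N ∈ I`, while
`D (1 - N* N) = -(N - D) (1 - N* N) ∈ I`. -/
theorem IsOperatorIdeal.mem_of_sub_partialIsometry {I : Set (H →L[ℂ] H)}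
    (hI : IsOperatorIdeal I) {N D : H →L[ℂ] H} (hN : N * star N * N = N) (hN1 : ‖N‖ ≤ 1)
    (hD : ‖D‖ < 1) (h : N - D ∈ I) : D ∈ I := by
  have hunit : IsUnit (1 - star N * D) := by
    refine isUnit_one_sub_of_norm_lt_one ?_
    calc ‖star N * D‖ ≤ ‖star N‖ * ‖D‖ := norm_mul_le _ _
      _ ≤ 1 * ‖D‖ := by rw [norm_star]; gcongr
      _ < 1 := by rwa [one_mul]
  obtain ⟨u, hu⟩ := hunit
  have hN' : N * (star N * N) = N := by rw [← mul_assoc, hN]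
  have h1 : star N * N = (↑u⁻¹ : H →L[ℂ] H) * (star N * (N - D) * (star N * N)) := by
    rw [Units.eq_inv_mul_iff_mul_eq, hu]
    rw [mul_sub, sub_mul, sub_mul, one_mul, mul_assoc (star N) N (star N * N), hN']
  have hP : star N * N ∈ I := by
    rw [h1]
    exact (hI.2.2.2 _ _ (hI.2.2.2 _ _ (hI.2.2.2 _ _ h).1).2).1
  have h2 : D = D * (star N * N) + (-1 : ℂ) • ((N - D) * (1 - star N * N)) := by
    rw [sub_mul, mul_sub, mul_sub, hN', mul_one, mul_one]
    module
  rw [h2]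
  exact hI.2.1 _ _ (hI.2.2.2 _ _ hP).1 (hI.2.2.1 _ _ (hI.2.2.2 _ _ h).2)

theorem commute_of_inverse {R : Type*} [Monoid R] {a r x : R} (h1 : r * a = 1) (h2 : a * r = 1)
    (h : a * x = x * a) : r * x = x * r := by
  calc r * x = r * (x * a) * r := by rw [mul_assoc, mul_assoc x, h2, mul_one]
    _ = x * r := by rw [← h, ← mul_assoc, h1, one_mul]

/-- The Cayley transforms `u α = (1 + iαT)(1 - iαT)⁻¹` of a small self-adjoint `T`. The factorization
of `T` through `u α - u β` comes from
`(1 - iβT) (u α - u β) (1 - iαT) = (1 - iβT) (1 + iαT) - (1 + iβT) (1 - iαT) = 2i (α - β) T`. -/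
theorem exists_cayley (T : H →L[ℂ] H) (hT : star T = T) (hT4 : ‖T‖ ≤ 1 / 4) :
    ∃ u : ℝ → H →L[ℂ] H,
      (∀ α ∈ Ioc (0 : ℝ) 1, u α ∈ unitary (H →L[ℂ] H) ∧ (∃ R, u α - 1 = T * R) ∧
        ‖u α - 1‖ ≤ 2 / 3) ∧
      ∀ α ∈ Ioc (0 : ℝ) 1, ∀ β ∈ Ioc (0 : ℝ) 1, α ≠ β → ∃ A B, T = A * (u α - u β) * B := by
  let t : ℝ → H →L[ℂ] H := fun α => ((α : ℂ) * Complex.I) • T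
  have htn : ∀ α ∈ Ioc (0 : ℝ) 1, ‖t α‖ ≤ 1 / 4 := by
    intro α hα
    rw [norm_smul, norm_mul, Complex.norm_I, Complex.norm_real, Real.norm_of_nonneg hα.1.le]
    nlinarith [hα.1, hα.2, norm_nonneg T]
  have hts : ∀ α, star (t α) = - t α := by
    intro α
    simp only [t, star_smul, hT, Complex.star_def, map_mul, Complex.conj_ofReal, Complex.conj_I]
    module
  have hex : ∀ α : ℝ, ∃ r : H →L[ℂ] H, α ∈ Ioc (0 : ℝ) 1 → r * (1 - t α) = 1 ∧ (1 - t α) * r = 1 := by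
    intro α
    by_cases hα : α ∈ Ioc (0 : ℝ) 1
    · obtain ⟨v, hv⟩ := isUnit_one_sub_of_norm_lt_one ((htn α hα).trans_lt (by norm_num))
      exact ⟨↑v⁻¹, fun _ => by rw [← hv]; simp⟩
    · exact ⟨0, fun h => absurd h hα⟩
  choose r hr using hex
  have hum : ∀ α ∈ Ioc (0 : ℝ) 1, (1 + t α) * r α - 1 = T * ((2 * ((α : ℂ) * Complex.I)) • r α) := by
    intro α hα
    nth_rewrite 2 [← (hr α hα).2]
    rw [← sub_mul, mul_smul_comm, ← smul_mul_assoc]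
    congr 1
    simp only [t]
    module
  refine ⟨fun α => (1 + t α) * r α, fun α hα => ⟨?_, ⟨_, hum α hα⟩, ?_⟩, ?_⟩
  · obtain ⟨h1, h2⟩ := hr α hα
    have hsr1 : (1 + t α) * star (r α) = 1 := by
      have := congrArg star h1
      simpa [star_mul, star_sub, hts] using this
    have hsr2 : star (r α) * (1 + t α) = 1 := by
      have := congrArg star h2
      simpa [star_mul, star_sub, hts] using this
    have hs : star ((1 + t α) * r α) = star (r α) * (1 - t α) := by
      rw [star_mul, star_add, hts, star_one, sub_eq_add_neg]
    have hpm : (1 - t α) * (1 + t α) = (1 + t α) * (1 - t α) := by noncomm_ring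
    have hsrc : star (r α) * (1 - t α) = (1 - t α) * star (r α) :=
      commute_of_inverse hsr2 hsr1 hpm.symm
    have hrc : r α * (1 + t α) = (1 + t α) * r α := commute_of_inverse h1 h2 hpm
    rw [Unitary.mem_iff, hs]
    constructor
    · calc star (r α) * (1 - t α) * ((1 + t α) * r α)
          = star (r α) * ((1 - t α) * (1 + t α)) * r α := by noncomm_ring
        _ = (star (r α) * (1 + t α)) * ((1 - t α) * r α) := by rw [hpm]; noncomm_ring
        _ = 1 := by rw [hsr2, h2, one_mul]
    · change (1 + t α) * r α * (star (r α) * (1 - t α)) = 1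
      rw [← hrc, hsrc]
      calc r α * (1 + t α) * ((1 - t α) * star (r α))
          = r α * ((1 + t α) * (1 - t α)) * star (r α) := by noncomm_ring
        _ = (r α * (1 - t α)) * ((1 + t α) * star (r α)) := by rw [← hpm]; noncomm_ring
        _ = 1 := by rw [h1, hsr1, one_mul]
  · have hrn : ‖r α‖ ≤ 4 / 3 := by
      have h1 : r α = 1 + t α * r α := by
        have := (hr α hα).2
        rw [sub_mul, one_mul] at this
        rw [← this]; abel
      have h2 : ‖r α‖ ≤ 1 + 1 / 4 * ‖r α‖ := by
        calc ‖r α‖ = ‖1 + t α * r α‖ := by rw [← h1]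
          _ ≤ ‖(1 : H →L[ℂ] H)‖ + ‖t α * r α‖ := norm_add_le _ _
          _ ≤ 1 + ‖t α‖ * ‖r α‖ := add_le_add norm_one_operator_le (norm_mul_le _ _)
          _ ≤ 1 + 1 / 4 * ‖r α‖ := by gcongr; exact htn α hα
      linarith
    have h3 : (1 + t α) * r α - 1 = (2 : ℂ) • (t α * r α) := by
      rw [hum α hα]
      simp only [t, mul_smul_comm, smul_mul_assoc, smul_smul]
    calc ‖(1 + t α) * r α - 1‖ = 2 * ‖t α * r α‖ := by rw [h3, norm_smul]; simp
      _ ≤ 2 * (‖t α‖ * ‖r α‖) := by gcongr; exact norm_mul_le _ _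
      _ ≤ 2 * (1 / 4 * (4 / 3)) := by gcongr; exact htn α hα
      _ = 2 / 3 := by norm_num
  · intro α hα β hβ hne
    have hc : (2 * (((α : ℂ) - β) * Complex.I)) ≠ 0 := by
      refine mul_ne_zero two_ne_zero (mul_ne_zero (sub_ne_zero.2 ?_) Complex.I_ne_zero)
      exact_mod_cast hne
    refine ⟨(2 * (((α : ℂ) - β) * Complex.I))⁻¹ • (1 - t β), 1 - t α, ?_⟩
    have h1 : (1 - t β) * ((1 + t α) * r α - (1 + t β) * r β) * (1 - t α) =
        (2 * (((α : ℂ) - β) * Complex.I)) • T := by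
      have e1 : (1 - t β) * ((1 + t α) * r α) * (1 - t α) = (1 - t β) * (1 + t α) := by
        rw [mul_assoc, mul_assoc, (hr α hα).1, mul_one]
      have e2 : (1 - t β) * ((1 + t β) * r β) * (1 - t α) = (1 + t β) * (1 - t α) := by
        have : (1 - t β) * ((1 + t β) * r β) = (1 + t β) * ((1 - t β) * r β) := by noncomm_ring
        rw [this, (hr β hβ).2, mul_one]
      rw [mul_sub (1 - t β), sub_mul ((1 - t β) * _), e1, e2]
      have : (1 - t β) * (1 + t α) - (1 + t β) * (1 - t α) = (2 : ℂ) • (t α - t β) := by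
        rw [two_smul]; noncomm_ring
      rw [this]
      simp only [t]
      module
    rw [smul_mul_assoc, smul_mul_assoc, h1, smul_smul, inv_mul_cancel₀ hc, one_smul]

/-- For `X = S₀ + S₁`, where `S₀` and `S₁` are isometries with orthogonal ranges, this is the operator
which acts as `u` on the range of `X` (identified with `H` through `X / √2`) and as the identity on
its orthogonal complement. In the decomposition `H ⊕ H` given by `S₀` and `S₁` all four entries of
`blockOp X u - 1` are equal to `½ (u - 1)`. Only `X* X = 2` is needed for `u ↦ blockOp X u` to be
multiplicative. -/
noncomputable def blockOp (X u : H →L[ℂ] H) : H →L[ℂ] H :=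
  1 + (1 / 2 : ℂ) • (X * (u - 1) * star X)

theorem blockOp_one (X : H →L[ℂ] H) : blockOp X 1 = 1 := by simp [blockOp]

theorem star_blockOp (X u : H →L[ℂ] H) : star (blockOp X u) = blockOp X (star u) := by
  have : star (1 / 2 : ℂ) = 1 / 2 := by simp
  simp only [blockOp, star_add, star_smul, star_mul, star_star, star_sub, star_one, mul_assoc, this]

theorem blockOp_mul {X : H →L[ℂ] H} (hX : star X * X = (2 : ℂ) • 1) (u v : H →L[ℂ] H) :
    blockOp X u * blockOp X v = blockOp X (u * v) := by
  have h1 : X * (u - 1) * star X * (X * (v - 1) * star X) =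
      (2 : ℂ) • (X * ((u - 1) * (v - 1)) * star X) := by
    calc X * (u - 1) * star X * (X * (v - 1) * star X)
        = X * (u - 1) * (star X * X) * ((v - 1) * star X) := by simp only [mul_assoc]
      _ = _ := by
        rw [hX]
        simp only [mul_smul_comm, smul_mul_assoc, mul_one, mul_assoc]
  have h2 : u * v - 1 = (u - 1) + (v - 1) + (u - 1) * (v - 1) := by noncomm_ring
  simp only [blockOp, h2, mul_add, add_mul, smul_mul_assoc, mul_smul_comm, one_mul, mul_one, h1]
  module

theorem blockOp_mem_unitary {X : H →L[ℂ] H} (hX : star X * X = (2 : ℂ) • 1) {u : H →L[ℂ] H}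
    (hu : u ∈ unitary (H →L[ℂ] H)) : blockOp X u ∈ unitary (H →L[ℂ] H) := by
  rw [Unitary.mem_iff] at hu ⊢
  rw [star_blockOp, blockOp_mul hX, blockOp_mul hX, hu.1, hu.2, blockOp_one]
  exact ⟨rfl, rfl⟩

end Unitaries

/-! ### Ingredients of the family and the non-conjugacy argument -/

section Main

variable {H : Type*} [NormedAddCommGroup H] [InnerProductSpace ℂ H] [CompleteSpace H]

/-- An operator `T` and its absolute value `|T|` are left multiples of each other, so they lie in the
same ideals; a small multiple of `|T|` is the required element. -/
theorem exists_small_selfAdjoint {I J : Set (H →L[ℂ] H)}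
    (hI : IsOperatorIdeal I) (hJ : IsOperatorIdeal J) (hIltJ : ∃ T ∈ J, T ∉ I) :
    ∃ T ∈ J, T ∉ I ∧ star T = T ∧ ‖T‖ ≤ 1 / 4 := by
  obtain ⟨T, hTJ, hTI⟩ := hIltJ
  obtain ⟨V, hV⟩ := exists_factor_of_norm_le T (CFC.abs T) 1
    (fun x => by rw [norm_cfcAbs_apply, one_mul])
  obtain ⟨V', hV'⟩ := exists_factor_of_norm_le (CFC.abs T) T 1
    (fun x => by rw [norm_cfcAbs_apply, one_mul])
  have hs : star (CFC.abs T) = CFC.abs T := (CFC.abs_nonneg T).isSelfAdjoint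
  have hAJ : CFC.abs T ∈ J := by rw [hV]; exact (hJ.2.2.2 _ _ hTJ).1
  have hAI : CFC.abs T ∉ I := fun h => hTI (by rw [hV']; exact (hI.2.2.2 _ _ h).1)
  set A := CFC.abs T
  have hpos : 0 < 4 * (‖A‖ + 1) := by positivity
  have hc : (((4 * (‖A‖ + 1))⁻¹ : ℝ) : ℂ) ≠ 0 := by exact_mod_cast (inv_pos.2 hpos).ne'
  refine ⟨(((4 * (‖A‖ + 1))⁻¹ : ℝ) : ℂ) • A, hJ.2.2.1 _ _ hAJ, fun h => hAI ?_, ?_, ?_⟩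
  · have := hI.2.2.1 (((4 * (‖A‖ + 1))⁻¹ : ℝ) : ℂ)⁻¹ _ h
    rwa [smul_smul, inv_mul_cancel₀ hc, one_smul] at this
  · rw [star_smul, hs, Complex.star_def, Complex.conj_ofReal]
  · rw [norm_smul, Complex.norm_real, Real.norm_of_nonneg (inv_pos.2 hpos).le,
      inv_mul_le_iff₀ hpos]
    linarith

/-- The isometries `S₀ : e n ↦ e (2n)` and `S₁ : e n ↦ e (2n + 1)` have orthogonal ranges, and their
range projections are diagonal. -/
theorem exists_even_odd_isometries (e : HilbertBasis ℕ ℂ H) :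
    ∃ S₀ S₁ : H →L[ℂ] H, star S₀ * S₀ = 1 ∧ star S₁ * S₁ = 1 ∧ star S₀ * S₁ = 0 ∧
      star S₁ * S₀ = 0 ∧ IsDiag e (S₀ * star S₀) ∧ IsDiag e (S₁ * star S₁) := by
  obtain ⟨S₀, h0, hS₀⟩ := exists_isometry e (x := fun n => e (2 * n))
    (e.orthonormal.comp _ fun m n (h : 2 * m = 2 * n) => by omega)
  obtain ⟨S₁, h1, hS₁⟩ := exists_isometry e (x := fun n => e (2 * n + 1))
    (e.orthonormal.comp _ fun m n (h : 2 * m + 1 = 2 * n + 1) => by omega)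
  have h01 : star S₀ * S₁ = 0 := by
    refine hilbertBasis_ext e fun n => hilbertBasis_ext_inner e fun m => ?_
    rw [mul_apply_eq_comp, ContinuousLinearMap.star_eq_adjoint,
      ContinuousLinearMap.adjoint_inner_right, hS₀, hS₁, e.orthonormal.2 (by omega)]
    simp
  have h10 : star S₁ * S₀ = 0 := by
    have := congrArg star h01
    rwa [star_mul, star_star, star_zero] at this
  have key : ∀ S S' : H →L[ℂ] H, star S * S = 1 → star S * S' = 0 → ∀ n,
      (S * star S) (S (e n)) = (1 : ℂ) • S (e n) ∧ (S * star S) (S' (e n)) = (0 : ℂ) • S' (e n) := by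
    intro S S' h h' n
    constructor
    · rw [← mul_apply_eq_comp, mul_assoc, h, mul_one, one_smul]
    · rw [← mul_apply_eq_comp, mul_assoc, h', mul_zero, zero_smul]; rfl
  refine ⟨S₀, S₁, h0, h1, h01, h10, fun n => ?_, fun n => ?_⟩ <;>
    obtain ⟨k, rfl | rfl⟩ := Nat.even_or_odd' n
  · exact ⟨1, by rw [← hS₀]; exact (key S₀ S₁ h0 h01 k).1⟩
  · exact ⟨0, by rw [← hS₁]; exact (key S₀ S₁ h0 h01 k).2⟩
  · exact ⟨0, by rw [← hS₀]; exact (key S₁ S₀ h1 h10 k).2⟩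
  · exact ⟨1, by rw [← hS₁]; exact (key S₁ S₀ h1 h10 k).1⟩

/-- With `Q₀ = S₀ S₀*` and `Q₁ = S₁ S₁*`, if the projections `U Q₀ U*` and `Q₁` commute, then the
corner `S₁* U S₀` of the isometry `U` is a partial isometry. -/
theorem compression_partialIsometry {S₀ S₁ U : H →L[ℂ] H} (h0 : star S₀ * S₀ = 1)
    (h1 : star S₁ * S₁ = 1) (hU : star U * U = 1)
    (hc : U * (S₀ * star S₀) * star U * (S₁ * star S₁) =
      S₁ * star S₁ * (U * (S₀ * star S₀) * star U)) :
    star S₁ * U * S₀ * star (star S₁ * U * S₀) * (star S₁ * U * S₀) = star S₁ * U * S₀ := by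
  calc star S₁ * U * S₀ * star (star S₁ * U * S₀) * (star S₁ * U * S₀)
      = star S₁ * (U * (S₀ * star S₀) * star U * (S₁ * star S₁)) * U * S₀ := by
        simp only [star_mul, star_star, mul_assoc]
    _ = (star S₁ * S₁) * star S₁ * U * S₀ * star S₀ * (star U * U) * S₀ := by
        rw [hc]; simp only [mul_assoc]
    _ = star S₁ * U * S₀ * (star S₀ * S₀) := by
        rw [h1, hU]; simp only [mul_assoc, one_mul]
    _ = star S₁ * U * S₀ := by rw [h0, mul_one]

end Main

/-- Let `{0} ⊊ I ⊊ J ⊊ B(H)` be operator ideals, and let `C₀` be a Cartan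
subalgebra of `J` with `U_J(H)`-conjugacy class `O`.  Then there is an uncountable family
`(C_α)_{α ∈ (0,1]}` of members of `O` such that the Cartan subalgebras `C_α ∩ I` of `I` are
pairwise not `U_I(H)`-conjugate; consequently `{C ∩ I : C ∈ O}` partitions into uncountably
many `U_I(H)`-conjugacy classes of Cartan subalgebras of `I`. -/
theorem orbit_partitions_into_uncountably_many_conjugacy_classes
    {H : Type*} [NormedAddCommGroup H] [InnerProductSpace ℂ H] [CompleteSpace H]
    (b : HilbertBasis ℕ ℂ H)
    (I J : Set (H →L[ℂ] H))
    (hI : IsOperatorIdeal I) (hJ : IsOperatorIdeal J)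
    (hIJ : I ⊆ J)
    (hInz : ∃ T ∈ I, T ≠ (0 : H →L[ℂ] H))
    (hIltJ : ∃ T ∈ J, T ∉ I)
    (hJproper : ∃ T : H →L[ℂ] H, T ∉ J)
    (C₀ : Set (H →L[ℂ] H)) (hC₀ : IsCartanSubalgebra J C₀) :
    ∃ C : ℝ → Set (H →L[ℂ] H),
      (∀ α ∈ Ioc (0 : ℝ) 1,
        ∃ W : H →L[ℂ] H, W ∈ unitary (H →L[ℂ] H) ∧ W - 1 ∈ J ∧
          (fun T : H →L[ℂ] H => W * T * star W) '' C₀ = C α) ∧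
      (∀ α ∈ Ioc (0 : ℝ) 1, ∀ β ∈ Ioc (0 : ℝ) 1, α ≠ β →
        ¬ ∃ W : H →L[ℂ] H, W ∈ unitary (H →L[ℂ] H) ∧ W - 1 ∈ I ∧
          (fun T : H →L[ℂ] H => W * T * star W) '' (C α ∩ I) = C β ∩ I) := by
  obtain ⟨e, hdiag⟩ := hC₀.exists_isDiag b hJ hJproper
  have hPI : ∀ n, rankOne ℂ (e n) (e n) ∈ I := fun n => rankOne_mem hI hInz _ _
  have hPC : ∀ n, rankOne ℂ (e n) (e n) ∈ C₀ := fun n =>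
    hC₀.mem_of_commute hJ (hIJ (hPI n))
      (by rw [ContinuousLinearMap.star_eq_adjoint, adjoint_rankOne])
      (fun A hA => (hdiag A hA).mul_comm (isDiag_rankOne e n))
  obtain ⟨T, hTJ, hTI, hTsa, hT4⟩ := exists_small_selfAdjoint hI hJ hIltJ
  obtain ⟨u, hu, huT⟩ := exists_cayley T hTsa hT4
  obtain ⟨S₀, S₁, h0, h1, h01, h10, hQ₀, hQ₁⟩ := exists_even_odd_isometries e
  let X := S₀ + S₁
  have hX : star X * X = (2 : ℂ) • 1 := by
    simp only [X, star_add, add_mul, mul_add, h0, h1, h01, h10]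
    module
  let W : ℝ → H →L[ℂ] H := fun α => blockOp X (u α)
  have hWu : ∀ α ∈ Ioc (0 : ℝ) 1, W α ∈ unitary (H →L[ℂ] H) := fun α hα =>
    blockOp_mem_unitary hX (hu α hα).1
  refine ⟨fun α => (fun T : H →L[ℂ] H => W α * T * star (W α)) '' C₀,
    fun α hα => ⟨W α, hWu α hα, ?_, rfl⟩, ?_⟩
  · obtain ⟨R, hR⟩ := (hu α hα).2.1
    simp only [W, blockOp, add_sub_cancel_left, hR]
    exact hJ.2.2.1 _ _ (hJ.2.2.2 _ _ (hJ.2.2.2 _ _ (hJ.2.2.2 _ _ hTJ).2).1).2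
  · rintro α hα β hβ hne ⟨V, hV, hVI, himage⟩
    obtain ⟨hWα, hWα'⟩ := Unitary.mem_iff.1 (hWu α hα)
    obtain ⟨hWβ, hWβ'⟩ := Unitary.mem_iff.1 (hWu β hβ)
    obtain ⟨hV1, hV2⟩ := Unitary.mem_iff.1 hV
    set U : H →L[ℂ] H := star (W β) * V * W α with hUdef
    have hU : star U * U = 1 := by
      calc star U * U = star (W α) * (star V * ((W β * star (W β)) * V)) * W α := by
            simp only [hUdef, star_mul, star_star, mul_assoc]
        _ = 1 := by rw [hWβ', one_mul, hV1, mul_one, hWα]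
    -- only the inclusion of `C β ∩ I` in `V (C α ∩ I) V*` is needed here
    have hconj : ∀ n, ∃ Y ∈ C₀, rankOne ℂ (e n) (e n) = U * Y * star U := by
      intro n
      have hmem : W β * rankOne ℂ (e n) (e n) * star (W β) ∈
          (fun T : H →L[ℂ] H => W β * T * star (W β)) '' C₀ ∩ I :=
        ⟨⟨_, hPC n, rfl⟩, (hI.2.2.2 _ _ (hI.2.2.2 _ _ (hPI n)).1).2⟩
      rw [← himage] at hmem
      obtain ⟨_, ⟨⟨Y, hY, rfl⟩, -⟩, hZ⟩ := hmem
      refine ⟨Y, hY, ?_⟩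
      calc rankOne ℂ (e n) (e n)
          = (star (W β) * W β) * rankOne ℂ (e n) (e n) * (star (W β) * W β) := by
            rw [hWβ, one_mul, mul_one]
        _ = star (W β) * (W β * rankOne ℂ (e n) (e n) * star (W β)) * W β := by
            simp only [mul_assoc]
        _ = U * Y * star U := by
            rw [← hZ]
            simp only [hUdef, star_mul, star_star, mul_assoc]
    have hZdiag : IsDiag e (U * (S₀ * star S₀) * star U) := by
      refine isDiag_of_commute_rankOne fun n => ?_
      obtain ⟨Y, hY, hn⟩ := hconj n
      have hcomm := (hdiag Y hY).mul_comm hQ₀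
      have hmul : ∀ A B : H →L[ℂ] H, U * A * star U * (U * B * star U) = U * (A * B) * star U := by
        intro A B
        calc U * A * star U * (U * B * star U) = U * A * (star U * U) * B * star U := by
              simp only [mul_assoc]
          _ = U * (A * B) * star U := by rw [hU, mul_one]; simp only [mul_assoc]
      rw [hn, hmul, hmul, hcomm]
    have hN := compression_partialIsometry h0 h1 hU (hZdiag.mul_comm hQ₁)
    have hN1 : ‖star S₁ * U * S₀‖ ≤ 1 := by
      have n0 := norm_le_one_of_star_mul_self h0
      have n1 := norm_le_one_of_star_mul_self h1
      have nU := norm_le_one_of_star_mul_self hU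
      calc ‖star S₁ * U * S₀‖ ≤ ‖star S₁‖ * ‖U‖ * ‖S₀‖ := norm_mul₃_le
        _ ≤ 1 * 1 * 1 := by rw [norm_star]; gcongr
        _ = 1 := by norm_num
    -- the corner of `W β* W α` is half of `u β* u α - 1`
    set w : H →L[ℂ] H := star (u β) * u α with hw
    have hcorner : star S₁ * (star (W β) * W α) * S₀ = (1 / 2 : ℂ) • (w - 1) := by
      have hX1 : star S₁ * X = 1 := by simp only [X, mul_add, h10, h1, zero_add]
      have hX0 : star X * S₀ = 1 := by simp only [X, star_add, add_mul, h0, h10, add_zero]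
      simp only [W]
      rw [star_blockOp, blockOp_mul hX, ← hw, blockOp, mul_add, add_mul, mul_one, h10, zero_add,
        mul_smul_comm, smul_mul_assoc]
      congr 1
      calc star S₁ * (X * (w - 1) * star X) * S₀ = (star S₁ * X) * (w - 1) * (star X * S₀) := by
            simp only [mul_assoc]
        _ = w - 1 := by rw [hX1, hX0, one_mul, mul_one]
    have hmemI : star S₁ * U * S₀ - (1 / 2 : ℂ) • (w - 1) ∈ I := by
      have : star S₁ * U * S₀ - (1 / 2 : ℂ) • (w - 1) =
          star S₁ * (star (W β) * (V - 1) * W α) * S₀ := by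
        rw [← hcorner, hUdef]
        noncomm_ring
      rw [this]
      exact (hI.2.2.2 _ _ (hI.2.2.2 _ _ (hI.2.2.2 _ _ (hI.2.2.2 _ _ hVI).1).2).1).2
    obtain ⟨hβ1, hβ2⟩ := Unitary.mem_iff.1 (hu β hβ).1
    have hwu : w - 1 = star (u β) * (u α - u β) := by rw [mul_sub, hβ1]
    have hnorm : ‖(1 / 2 : ℂ) • (w - 1)‖ < 1 := by
      have hs : ‖star (u β)‖ ≤ 1 := by rw [norm_star]; exact norm_le_one_of_star_mul_self hβ1
      have hd : ‖u α - u β‖ ≤ 2 / 3 + 2 / 3 := by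
        calc ‖u α - u β‖ = ‖(u α - 1) - (u β - 1)‖ := by congr 1; abel
          _ ≤ ‖u α - 1‖ + ‖u β - 1‖ := norm_sub_le _ _
          _ ≤ 2 / 3 + 2 / 3 := add_le_add (hu α hα).2.2 (hu β hβ).2.2
      have hle : ‖w - 1‖ ≤ 1 * (2 / 3 + 2 / 3) := by
        rw [hwu]
        exact (norm_mul_le _ _).trans (by gcongr)
      rw [norm_smul]
      norm_num at hle ⊢
      linarith
    have hhalf := hI.mem_of_sub_partialIsometry hN hN1 hnorm hmemI
    have hdiff : u α - u β ∈ I := by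
      have h2 : u α - u β = (2 : ℂ) • (u β * ((1 / 2 : ℂ) • (w - 1))) := by
        rw [hwu, mul_smul_comm, smul_smul, ← mul_assoc, hβ2, one_mul]
        norm_num
      rw [h2]
      exact hI.2.2.1 _ _ (hI.2.2.2 _ _ hhalf).1
    obtain ⟨A, B, hAB⟩ := huT α hα β hβ hne
    exact hTI (by rw [hAB]; exact (hI.2.2.2 _ _ (hI.2.2.2 _ _ hdiff).1).2)
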